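/- Let L > 0, T > 0, m₁, m₂ > 0, N ∈ ℕ with N ≥ 2, a := 1/N. Let φ : ℝ × [0,T] → ℝ be continuous in t and C⁶ in α with φ(α+1,t) = φ(α,t) − L, ∂_α φ ≤ −m₁ < 0, and |∂_α^k φ| ≤ m₂ for 1 ≤ k ≤ 6, and set y_i(t) := φ((N−i)/N, t) for i ∈ ℤ (so y_{i+N} = y_i + L and m₁ a ≤ y_{i+1}−y_i ≤ m₂ a). For an N-periodic sequence z = (z_i)_{i∈ℤ} (z_{i+N} = z_i) define M_i := 1/(y_{i+1}−y_i) + a²/(y_{i+1}−y_i)³ − 1/(y_i−y_{i−1}) − a²/(y_i−y_{i−1})³ − (2πa/L²)·Σ_{j=1,j≠i}^N cot(π(y_j−y_i)/L), and T_i := −(z_{i+1}−z_i)/(y_{i+1}−y_i)² − 3a²(z_{i+1}−z_i)/(y_{i+1}−y_i)⁴ + (z_i−z_{i−1})/(y_i−y_{i−1})² + 3a²(z_i−z_{i−1})/(y_i−y_{i−1})⁴ + (2π²a/L³)·Σ_{j=1,j≠i}^N (z_j−z_i)/sin²(π(y_j−y_i)/L). Suppose z : [0,T] → ℝ^ℤ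 is a C¹ N-periodic solution of the linearized system dz_i/dt = (1/a)·[ (T_{i+1}−T_i)/(y_{i+1}−y_i) − (T_i−T_{i−1})/(y_i−y_{i−1}) ] − (1/a)·[ ((z_{i+1}−z_i)/(y_{i+1}−y_i)²)(M_{i+1}−M_i) − ((z_i−z_{i−1})/(y_i−y_{i−1})²)(M_i−M_{i−1}) ]. Then there is C = C(m₁, m₂, L, T), independent of N, such that ‖z(t)‖ ≤ C·‖z(0)‖ for all t ∈ [0,T], where ‖z‖ := ( Σ_{i=1}^N a·z_i² )^{1/2}. -/

import Mathlib

open Real Filter Topology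

/-- `M_i = f_i(y)`: the chemical potential at the background configuration `y`, `a = 1/N`;
the lattice sum is over the period window `j ∈ {i+1, …, i+N−1}`, which by `π`-periodicity of
`cot` agrees with `Σ_{j=1,j≠i}^N`. -/
noncomputable def Mlin (N : ℕ) (L : ℝ) (y : ℤ → ℝ) (i : ℤ) : ℝ :=
  1 / (y (i + 1) - y i) + (N:ℝ)⁻¹ ^ 2 / (y (i + 1) - y i) ^ 3
    - 1 / (y i - y (i - 1)) - (N:ℝ)⁻¹ ^ 2 / (y i - y (i - 1)) ^ 3
    - (2 * π * (N:ℝ)⁻¹ / L ^ 2) *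
        (∑ j ∈ Finset.Ico (i + 1) (i + (N:ℤ)), Real.cot (π * (y j - y i) / L))

/-- `T_i`: the first variation of `f_i` at `y` in direction `z`, `a = 1/N`; the lattice sum is
over the period window `j ∈ {i+1, …, i+N−1}` (which agrees with `Σ_{j=1,j≠i}^N` by
periodicity of `sin²` and of `z`). -/
noncomputable def Tlin (N : ℕ) (L : ℝ) (y z : ℤ → ℝ) (i : ℤ) : ℝ :=
  -(z (i + 1) - z i) / (y (i + 1) - y i) ^ 2
    - 3 * (N:ℝ)⁻¹ ^ 2 * (z (i + 1) - z i) / (y (i + 1) - y i) ^ 4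
    + (z i - z (i - 1)) / (y i - y (i - 1)) ^ 2
    + 3 * (N:ℝ)⁻¹ ^ 2 * (z i - z (i - 1)) / (y i - y (i - 1)) ^ 4
    + (2 * π ^ 2 * (N:ℝ)⁻¹ / L ^ 3) *
        (∑ j ∈ Finset.Ico (i + 1) (i + (N:ℤ)),
          (z j - z i) / Real.sin (π * (y j - y i) / L) ^ 2)

/-- The right-hand side of the linearized step-flow ODE system. -/
noncomputable def Zrhs (N : ℕ) (L : ℝ) (y z : ℤ → ℝ) (i : ℤ) : ℝ :=
  (N:ℝ) * ((Tlin N L y z (i + 1) - Tlin N L y z i) / (y (i + 1) - y i)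
      - (Tlin N L y z i - Tlin N L y z (i - 1)) / (y i - y (i - 1)))
    - (N:ℝ) * (((z (i + 1) - z i) / (y (i + 1) - y i) ^ 2)
          * (Mlin N L y (i + 1) - Mlin N L y i)
        - ((z i - z (i - 1)) / (y i - y (i - 1)) ^ 2)
          * (Mlin N L y i - Mlin N L y (i - 1)))

/-!
The proof is an energy estimate. Let `v` be the difference quotient of `z` with respect to `y` and
`q` its difference divided by `1 / N`, the discrete second derivative of `z`. Summation by parts
turns `∑ zᵢ żᵢ` into `∑ Tᵢ qᵢ - ∑ Mᵢ qᵢ (vᵢ + vᵢ₋₁)`. The nearest-neighbour part of `T` dissipates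
`‖q‖² / m₂`, up to `‖q‖ ‖v‖`. In the lattice sum of `T` the terms at distance at most `e N` are
paired symmetrically, `i + k` with `i - k`: the first-order singularities cancel, and what remains
is at most `ε ‖q‖ + A ‖v‖` with `ε` small when `e` is small. The terms further away have bounded
kernel and cost only `B ‖z‖`. The same pairing shows that `M` is bounded. Finally
`m₁ ‖v‖² ≤ ‖q‖ ‖z‖` lets the dissipation absorb every other term up to a multiple of `‖z‖²`, and
Grönwall's inequality concludes.
-/

section PeriodicSums

variable {N : ℕ} {f g : ℤ → ℝ}

lemma sum_Ico_eq_sum_range_add {M : Type*} [AddCommMonoid M] (f : ℤ → M) (i : ℤ) (n : ℕ) :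
    ∑ j ∈ Finset.Ico i (i + n), f j = ∑ k ∈ Finset.range n, f (i + k) := by
  refine Finset.sum_nbij' (fun j => (j - i).toNat) (fun k => i + k) ?_ ?_ ?_ ?_ ?_ <;>
    intro j hj <;> simp only [Finset.mem_Ico, Finset.mem_range] at hj ⊢ <;> try omega
  congr 1
  omega

lemma sum_Ico_eq_of_periodic {M : Type*} [AddCommGroup M] {f : ℤ → M}
    (hf : Function.Periodic f (N : ℤ)) (i j : ℤ) :
    ∑ l ∈ Finset.Ico i (i + N), f l = ∑ l ∈ Finset.Ico j (j + N), f l := by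
  have step (m : ℤ) : ∑ l ∈ Finset.Ico (m + 1) (m + 1 + N), f l =
      ∑ l ∈ Finset.Ico m (m + N), f l := by
    simp only [sum_Ico_eq_sum_range_add]
    rw [← sub_eq_zero, ← Finset.sum_sub_distrib]
    have telescope := Finset.sum_range_sub (fun k : ℕ => f (m + k)) N
    simpa [hf m, add_assoc, add_comm, add_left_comm] using telescope
  have eq_zero (m : ℤ) :
      ∑ l ∈ Finset.Ico m (m + N), f l = ∑ l ∈ Finset.Ico 0 (0 + (N : ℤ)), f l := by
    induction m with
    | zero => rfl
    | succ m ih => rw [step, ih]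
    | pred m ih => rw [← ih, ← step, sub_add_cancel]
  rw [eq_zero i, eq_zero j]

lemma sum_Ico_add_period {M : Type*} [AddCommMonoid M] (N : ℕ) (f : ℤ → M) (i : ℤ) :
    ∑ j ∈ Finset.Ico (i + N + 1) (i + N + N), f j =
      ∑ j ∈ Finset.Ico (i + 1) (i + N), f (j + N) := by
  rw [Finset.sum_Ico_add', add_right_comm]

lemma sum_Icc_comp_add_of_periodic {M : Type*} [AddCommGroup M] {f : ℤ → M}
    (hf : Function.Periodic f (N : ℤ)) (k : ℤ) :
    ∑ i ∈ Finset.Icc (1 : ℤ) N, f (i + k) = ∑ i ∈ Finset.Icc (1 : ℤ) N, f i := by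
  have Icc_eq : Finset.Icc (1 : ℤ) N = Finset.Ico 1 (1 + (N : ℤ)) := by
    ext i
    simp only [Finset.mem_Icc, Finset.mem_Ico]
    omega
  rw [Icc_eq, Finset.sum_Ico_add', add_right_comm, sum_Ico_eq_of_periodic hf _ 1]

lemma sum_Icc_mul_sub_pred_of_periodic (hf : Function.Periodic f (N : ℤ))
    (hg : Function.Periodic g (N : ℤ)) :
    ∑ i ∈ Finset.Icc (1 : ℤ) N, f i * (g i - g (i - 1)) =
      -∑ i ∈ Finset.Icc (1 : ℤ) N, (f (i + 1) - f i) * g i := by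
  have hper : Function.Periodic (fun i => f (i + 1) * g i) (N : ℤ) := fun i => by
    simp only [add_right_comm i (N : ℤ) 1, hf (i + 1), hg i]
  have shift := sum_Icc_comp_add_of_periodic hper (-1)
  simp only [← sub_eq_add_neg, sub_add_cancel] at shift
  simp only [mul_sub, sub_mul, Finset.sum_sub_distrib, shift]
  ring

lemma sum_Ico_eq_sum_symm_add_sum_middle {K : ℕ} (hK : 2 * K < N)
    (hf : Function.Periodic f (N : ℤ)) (i : ℤ) :
    ∑ j ∈ Finset.Ico (i + 1) (i + N), f j =
      ∑ k ∈ Finset.Ico 1 (K + 1), (f (i + k) + f (i - k)) +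
        ∑ k ∈ Finset.Ico (K + 1) (N - K), f (i + k) := by
  have reindex : ∑ j ∈ Finset.Ico (i + 1) (i + N), f j = ∑ k ∈ Finset.Ico 1 N, f (i + k) := by
    rw [Finset.sum_Ico_eq_sum_range, show i + (N : ℤ) = i + 1 + (N - 1 : ℕ) by omega,
      sum_Ico_eq_sum_range_add]
    simp only [Nat.cast_add, Nat.cast_one, add_assoc]
  have wrap : ∑ k ∈ Finset.Ico (N - K) N, f (i + k) = ∑ k ∈ Finset.Ico 1 (K + 1), f (i - k) := by
    have reflect := Finset.sum_Ico_reflect (fun k : ℕ => f (i + k)) 1 (show K + 1 ≤ N + 1 by omega)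
    simp only [Nat.add_sub_add_right, Nat.add_sub_cancel] at reflect
    rw [← reflect]
    refine Finset.sum_congr rfl fun k hk => ?_
    rw [Finset.mem_Ico] at hk
    rw [← hf (i - k), Nat.cast_sub (by omega)]
    congr 1
    ring
  rw [reindex, Finset.sum_add_distrib, ← wrap,
    ← Finset.sum_Ico_consecutive _ (show 1 ≤ K + 1 by omega) (show K + 1 ≤ N by omega),
    ← Finset.sum_Ico_consecutive _ (show K + 1 ≤ N - K by omega) (Nat.sub_le N K)]
  ring

lemma abs_sum_Ico_le_of_periodic {K : ℕ} (hK : 2 * K < N)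
    (hf : Function.Periodic f (N : ℤ)) (i : ℤ) :
    |∑ j ∈ Finset.Ico (i + 1) (i + N), f j| ≤
      ∑ k ∈ Finset.Ico 1 (K + 1), |f (i + k) + f (i - k)| +
        ∑ k ∈ Finset.Ico (K + 1) (N - K), |f (i + k)| := by
  rw [sum_Ico_eq_sum_symm_add_sum_middle hK hf]
  exact (abs_add_le _ _).trans
    (add_le_add (Finset.abs_sum_le_sum_abs _ _) (Finset.abs_sum_le_sum_abs _ _))

lemma abs_sub_le_sum_Ioc_abs_sub_pred (f : ℤ → ℝ) {m n : ℤ} (hmn : m ≤ n) :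
    |f n - f m| ≤ ∑ l ∈ Finset.Ioc m n, |f l - f (l - 1)| := by
  induction n, hmn using Int.leInduction with
  | base => simp
  | succ n hmn ih =>
    rw [← Finset.insert_Ioc_right_eq_Ioc_add_one hmn, Finset.sum_insert (by simp),
      add_sub_cancel_right]
    exact (abs_sub_le _ (f n) _).trans (by gcongr)

lemma abs_sub_le_sum_Ioc_abs_sub_pred_of_mem_Icc (f : ℤ → ℝ) {m n a b : ℤ}
    (ha : a ∈ Set.Icc m n) (hb : b ∈ Set.Icc m n) :
    |f a - f b| ≤ ∑ l ∈ Finset.Ioc m n, |f l - f (l - 1)| := by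
  wlog hba : b ≤ a generalizing a b
  · rw [abs_sub_comm]
    exact this hb ha (le_of_not_ge hba)
  exact (abs_sub_le_sum_Ioc_abs_sub_pred f hba).trans <|
    Finset.sum_le_sum_of_subset_of_nonneg (Finset.Ioc_subset_Ioc hb.1 ha.2)
      fun _ _ _ => abs_nonneg _

end PeriodicSums

section PeriodSeminorm

/-- The `ℓ²` seminorm `(∑_{i=1}^N f_i²)^{1/2}` over one period. It differs from the scaled norm of
the theorem by the factor `N^{-1/2}`, which cancels in every estimate. -/
noncomputable def periodSeminorm (N : ℕ) : Seminorm ℝ (ℤ → ℝ) :=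
  (normSeminorm ℝ (EuclideanSpace ℝ (Finset.Icc (1 : ℤ) N))).comp
    ((WithLp.linearEquiv 2 ℝ _).symm.toLinearMap ∘ₗ LinearMap.funLeft ℝ ℝ Subtype.val)

variable {N : ℕ} {f g : ℤ → ℝ}

lemma periodSeminorm_eq_sqrt (N : ℕ) (f : ℤ → ℝ) :
    periodSeminorm N f = √(∑ i ∈ Finset.Icc (1 : ℤ) N, f i ^ 2) := by
  rw [← Finset.sum_coe_sort]
  simp [periodSeminorm, EuclideanSpace.norm_eq, LinearMap.funLeft_apply]

lemma periodSeminorm_sq (N : ℕ) (f : ℤ → ℝ) :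
    periodSeminorm N f ^ 2 = ∑ i ∈ Finset.Icc (1 : ℤ) N, f i ^ 2 := by
  rw [periodSeminorm_eq_sqrt, Real.sq_sqrt (Finset.sum_nonneg fun _ _ => sq_nonneg _)]

lemma periodSeminorm_mono (h : ∀ i, |f i| ≤ g i) : periodSeminorm N f ≤ periodSeminorm N g := by
  simp only [periodSeminorm_eq_sqrt]
  exact Real.sqrt_le_sqrt (Finset.sum_le_sum fun i _ => sq_le_sq.2 ((h i).trans (le_abs_self _)))

lemma periodSeminorm_abs (f : ℤ → ℝ) :
    periodSeminorm N (fun i => |f i|) = periodSeminorm N f := by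
  simp only [periodSeminorm_eq_sqrt, sq_abs]

lemma periodSeminorm_abs_comp_add (hf : Function.Periodic f (N : ℤ)) (k : ℤ) :
    periodSeminorm N (fun i => |f (i + k)|) = periodSeminorm N f := by
  simp only [periodSeminorm_eq_sqrt, sq_abs]
  rw [sum_Icc_comp_add_of_periodic (f := fun i => f i ^ 2) fun i => by simp only [hf i]]

lemma periodSeminorm_const_mul {c : ℝ} (hc : 0 ≤ c) (f : ℤ → ℝ) :
    periodSeminorm N (fun i => c * f i) = c * periodSeminorm N f := by
  have smul := map_smul_eq_mul (periodSeminorm N) c f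
  rwa [Real.norm_of_nonneg hc] at smul

lemma periodSeminorm_add_le (f g : ℤ → ℝ) :
    periodSeminorm N (fun i => f i + g i) ≤ periodSeminorm N f + periodSeminorm N g :=
  map_add_le_add (periodSeminorm N) f g

lemma periodSeminorm_sum_le {ι : Type*} (s : Finset ι) (F : ι → ℤ → ℝ) :
    periodSeminorm N (fun i => ∑ k ∈ s, F k i) ≤ ∑ k ∈ s, periodSeminorm N (F k) := by
  rw [← Finset.sum_fn]
  exact Finset.le_sum_of_subadditive _ (map_zero _).le (map_add_le_add _) _ _

lemma periodSeminorm_const_mul_abs_add_abs_le (hf : Function.Periodic f (N : ℤ)) {c : ℝ}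
    (hc : 0 ≤ c) (k : ℤ) :
    periodSeminorm N (fun i => c * (|f (i + k)| + |f i|)) ≤ c * (2 * periodSeminorm N f) := by
  rw [periodSeminorm_const_mul hc, two_mul]
  gcongr
  refine (periodSeminorm_add_le _ _).trans_eq ?_
  rw [periodSeminorm_abs_comp_add hf, periodSeminorm_abs]

lemma periodSeminorm_sum_Ioc_abs_le (hf : Function.Periodic f (N : ℤ)) (k : ℕ) :
    periodSeminorm N (fun i => ∑ l ∈ Finset.Ioc (i - k) (i + k), |f l|) ≤
      2 * k * periodSeminorm N f := by
  have reindex (i : ℤ) : ∑ l ∈ Finset.Ioc (i - k) (i + k), |f l| =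
      ∑ l ∈ Finset.Ioc (-k : ℤ) k, |f (i + l)| := by
    rw [sub_eq_add_neg, ← Finset.map_add_left_Ioc, Finset.sum_map]
    rfl
  simp only [reindex]
  refine (periodSeminorm_sum_le _ fun l i => |f (i + l)|).trans_eq ?_
  simp only [periodSeminorm_abs_comp_add hf, Finset.sum_const, Int.card_Ioc, nsmul_eq_mul]
  congr 1
  norm_cast
  omega

lemma sum_abs_mul_abs_comp_add_le (f : ℤ → ℝ) (hg : Function.Periodic g (N : ℤ)) (k : ℤ) :
    ∑ i ∈ Finset.Icc (1 : ℤ) N, |f i| * |g (i + k)| ≤ periodSeminorm N f * periodSeminorm N g := by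
  refine (Real.sum_mul_le_sqrt_mul_sqrt _ _ _).trans (le_of_eq ?_)
  rw [← periodSeminorm_abs_comp_add hg k]
  simp only [periodSeminorm_eq_sqrt, sq_abs]

end PeriodSeminorm

section Trigonometry

lemma abs_div_le_div {x y A B : ℝ} (hB : 0 < B) (hx : |x| ≤ A) (hy : B ≤ y) :
    |x / y| ≤ A / B := by
  rw [abs_div, abs_of_pos (hB.trans_le hy)]
  exact div_le_div₀ ((abs_nonneg x).trans hx) hx hB hy

lemma abs_cot_sub_cot_le {α β b : ℝ} (hb : 0 < b) (hα : b ≤ sin α) (hβ : b ≤ sin β) :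
    |Real.cot α - Real.cot β| ≤ |α - β| / b ^ 2 := by
  have sinα_pos : 0 < sin α := hb.trans_le hα
  have sinβ_pos : 0 < sin β := hb.trans_le hβ
  have cot_sub_cot : Real.cot α - Real.cot β = sin (β - α) / (sin α * sin β) := by
    rw [Real.cot_eq_cos_div_sin, Real.cot_eq_cos_div_sin, sin_sub]
    field_simp
  rw [cot_sub_cot, sq, abs_sub_comm]
  exact abs_div_le_div (by positivity) abs_sin_le_abs (by gcongr)

lemma sin_sub_mul_sin_add (α β : ℝ) : sin (β - α) * sin (β + α) = sin β ^ 2 - sin α ^ 2 := by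
  rw [sin_sub, sin_add]
  linear_combination sin β ^ 2 * cos_sq' α - sin α ^ 2 * cos_sq' β

lemma abs_div_sin_sq_sub_div_sin_sq_le {α β b C : ℝ} (hb : 0 < b) (hα : b ≤ sin α)
    (hβ : b ≤ sin β) (hα₀ : 0 ≤ α) (hβ₀ : 0 ≤ β) (hαC : α ≤ C) (hβC : β ≤ C) :
    |α / sin α ^ 2 - β / sin β ^ 2| ≤ 3 * C ^ 2 * |α - β| / b ^ 4 := by
  have sinα_pos : 0 < sin α := hb.trans_le hα
  have sinβ_pos : 0 < sin β := hb.trans_le hβ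
  have numerator : α / sin α ^ 2 - β / sin β ^ 2 =
      ((α - β) * sin β ^ 2 + β * (sin (β - α) * sin (β + α))) / (sin α ^ 2 * sin β ^ 2) := by
    rw [sin_sub_mul_sin_add]
    field_simp
    ring
  have C_nonneg : 0 ≤ C := hβ₀.trans hβC
  have sinβ_le : sin β ≤ C := (sin_le hβ₀).trans hβC
  have sin_sub_le : |sin (β - α)| ≤ |α - β| := abs_sub_comm α β ▸ abs_sin_le_abs
  have sin_add_le : |sin (β + α)| ≤ 2 * C :=
    abs_sin_le_abs.trans (by rw [abs_of_nonneg (by positivity)]; linarith)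
  rw [numerator, show b ^ 4 = b ^ 2 * b ^ 2 by ring]
  refine abs_div_le_div (by positivity) ?_ (by gcongr)
  calc |(α - β) * sin β ^ 2 + β * (sin (β - α) * sin (β + α))|
      ≤ |α - β| * sin β ^ 2 + β * (|sin (β - α)| * |sin (β + α)|) := by
        refine (abs_add_le _ _).trans_eq ?_
        rw [abs_mul, abs_mul, abs_mul, abs_of_nonneg hβ₀, abs_of_nonneg (sq_nonneg (sin β))]
    _ ≤ |α - β| * C ^ 2 + C * (|α - β| * (2 * C)) := by gcongr
    _ = 3 * C ^ 2 * |α - β| := by ring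

lemma two_div_mul_le_sin_pi_mul_div {L x s : ℝ} (hx : 0 ≤ x) (hxL : x ≤ L) (hsx : s ≤ x)
    (hsL : s ≤ L - x) : 2 / L * s ≤ sin (π * x / L) := by
  rcases (hx.trans hxL).eq_or_lt with rfl | hL
  · simp
  have of_le_half {w : ℝ} (hw : 0 ≤ w) (hwL : w ≤ L / 2) : 2 / L * w ≤ sin (π * w / L) := by
    have jordan := mul_le_sin (x := π * w / L) (by positivity)
      (by rw [div_le_div_iff₀ hL two_pos]; nlinarith [pi_pos])
    rwa [show 2 / π * (π * w / L) = 2 / L * w by field_simp] at jordan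
  rcases le_total x (L / 2) with hxh | hxh
  · exact le_trans (by gcongr) (of_le_half hx hxh)
  · rw [← sin_pi_sub, show π - π * x / L = π * (L - x) / L by field_simp]
    exact le_trans (by gcongr) (of_le_half (sub_nonneg.2 hxL) (by linarith))

end Trigonometry

section InversePowers

lemma abs_pow_div_pow_sub_pow_div_pow_le {a m c u w : ℝ} (ha : 0 < a) (hm : 0 < m)
    (hu : m * a ≤ u) (hw : m * a ≤ w) (huw : |u - w| ≤ c * a ^ 2) (n : ℕ) :
    |a ^ n / u ^ (n + 1) - a ^ n / w ^ (n + 1)| ≤ (n + 1) * c / m ^ (n + 2) := by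
  have u_pos : 0 < u := (mul_pos hm ha).trans_le hu
  have w_pos : 0 < w := (mul_pos hm ha).trans_le hw
  have ratio_le {x : ℝ} (hx : m * a ≤ x) (hx₀ : 0 < x) : |a / x| ≤ 1 / m := by
    rw [abs_of_pos (by positivity), div_le_div_iff₀ hx₀ hm]
    linarith
  have ratio_sub : |a / u - a / w| ≤ a * (c / m ^ 2) := by
    rw [show a / u - a / w = a * (w - u) / (u * w) by field_simp,
      show a * (c / m ^ 2) = a * (c * a ^ 2) / ((m * a) * (m * a)) by field_simp]
    refine abs_div_le_div (by positivity) ?_ (by gcongr)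
    rw [abs_mul, abs_of_pos ha, abs_sub_comm]
    gcongr
  have rescale (x : ℝ) : a ^ n / x ^ (n + 1) = (a / x) ^ (n + 1) / a := by
    rw [div_pow, pow_succ a]
    field_simp
  rw [rescale, rescale, ← sub_div, abs_div, abs_of_pos ha, div_le_iff₀ ha]
  calc |(a / u) ^ (n + 1) - (a / w) ^ (n + 1)|
      ≤ |a / u - a / w| * (n + 1 : ℕ) * max |a / u| |a / w| ^ n := abs_pow_sub_pow_le _ _ _
    _ ≤ a * (c / m ^ 2) * (n + 1 : ℕ) * (1 / m) ^ n := by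
        have bound_nonneg := (abs_nonneg _).trans ratio_sub
        gcongr
        exact max_le (ratio_le hu u_pos) (ratio_le hw w_pos)
    _ = (n + 1) * c / m ^ (n + 2) * a := by
        rw [one_div_pow, Nat.cast_succ]
        field_simp
        ring

end InversePowers

/-- A strictly increasing lattice configuration `y` with period `N` and length `L`: its gaps lie
between `m₁ / N` and `m₂ / N`, and its symmetric second differences over `k` steps are at most
`m₂ (k / N)²`. It is the discrete counterpart of a profile `φ` with `φ_α ≤ -m₁` and
`|φ_α|, |φ_αα| ≤ m₂`. -/
structure IsStepConfiguration (N : ℕ) (L m₁ m₂ : ℝ) (y : ℤ → ℝ) : Prop where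
  size_pos : 0 < N
  lower_pos : 0 < m₁
  add_period : ∀ i, y (i + N) = y i + L
  le_gap : ∀ i, m₁ / N ≤ y (i + 1) - y i
  gap_le : ∀ i, y (i + 1) - y i ≤ m₂ / N
  abs_second_diff_le : ∀ (i : ℤ) (k : ℕ), |y (i + k) + y (i - k) - 2 * y i| ≤ m₂ * (k / N) ^ 2

namespace IsStepConfiguration

variable {N : ℕ} {L m₁ m₂ : ℝ} {y : ℤ → ℝ}

lemma cast_size_pos (h : IsStepConfiguration N L m₁ m₂ y) : (0 : ℝ) < N :=
  Nat.cast_pos.2 h.size_pos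

lemma gap_pos (h : IsStepConfiguration N L m₁ m₂ y) (i : ℤ) : 0 < y (i + 1) - y i :=
  (div_pos h.lower_pos h.cast_size_pos).trans_le (h.le_gap i)

lemma upper_pos (h : IsStepConfiguration N L m₁ m₂ y) : 0 < m₂ :=
  (div_pos_iff_of_pos_right h.cast_size_pos).1 ((h.gap_pos 0).trans_le (h.gap_le 0))

lemma lower_mul_le_sub (h : IsStepConfiguration N L m₁ m₂ y) {i j : ℤ} (hij : i ≤ j) :
    m₁ * ((j - i) / N) ≤ y j - y i := by
  induction j, hij using Int.leInduction with
  | base => simp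
  | succ j _ ih =>
    calc m₁ * (((j + 1 : ℤ) - i) / N) = m₁ * ((j - i) / N) + m₁ / N := by push_cast; ring
      _ ≤ y (j + 1) - y i := by linarith [h.le_gap j]

lemma sub_le_upper_mul (h : IsStepConfiguration N L m₁ m₂ y) {i j : ℤ} (hij : i ≤ j) :
    y j - y i ≤ m₂ * ((j - i) / N) := by
  induction j, hij using Int.leInduction with
  | base => simp
  | succ j _ ih =>
    calc y (j + 1) - y i ≤ m₂ * ((j - i) / N) + m₂ / N := by linarith [h.gap_le j]
      _ = m₂ * (((j + 1 : ℤ) - i) / N) := by push_cast; ring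

lemma length_pos (h : IsStepConfiguration N L m₁ m₂ y) : 0 < L := by
  have total := h.lower_mul_le_sub (i := 0) (j := 0 + N) (by omega)
  rw [h.add_period, add_sub_cancel_left] at total
  push_cast at total
  rw [zero_add, sub_zero, div_self h.cast_size_pos.ne', mul_one] at total
  exact h.lower_pos.trans_le total

lemma mul_le_sin (h : IsStepConfiguration N L m₁ m₂ y) {i j : ℤ} (hij : i ≤ j) (hji : j ≤ i + N)
    {s : ℝ} (hs : s ≤ (j - i) / N) (hs' : s ≤ (i + N - j) / N) :
    2 * m₁ / L * s ≤ sin (π * (y j - y i) / L) := by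
  have m₁_pos := h.lower_pos
  have forward := h.lower_mul_le_sub hij
  have backward := h.lower_mul_le_sub hji
  rw [h.add_period] at backward
  push_cast at backward
  have hij' : (0 : ℝ) ≤ (j - i) / N := div_nonneg (by simpa using hij) h.cast_size_pos.le
  have hji' : (0 : ℝ) ≤ (i + N - j) / N :=
    div_nonneg (by rw [sub_nonneg]; exact_mod_cast hji) h.cast_size_pos.le
  rw [show 2 * m₁ / L * s = 2 / L * (m₁ * s) by ring]
  refine two_div_mul_le_sin_pi_mul_div ?_ ?_ ?_ ?_
  · exact (mul_nonneg m₁_pos.le hij').trans forward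
  · linarith [mul_nonneg m₁_pos.le hji']
  · exact (mul_le_mul_of_nonneg_left hs m₁_pos.le).trans forward
  · linarith [mul_le_mul_of_nonneg_left hs' m₁_pos.le]

lemma mul_le_sin_of_two_mul_le (h : IsStepConfiguration N L m₁ m₂ y) (i : ℤ) {k : ℕ}
    (hk : 2 * k ≤ N) : 2 * m₁ / L * (k / N) ≤ sin (π * (y (i + k) - y i) / L) := by
  have hk' : (2 : ℝ) * k ≤ N := mod_cast hk
  refine h.mul_le_sin (by omega) (by omega) ?_ ?_ <;>
    rw [div_le_div_iff_of_pos_right h.cast_size_pos] <;> push_cast <;> linarith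

lemma mul_le_sin_of_mem_Ico (h : IsStepConfiguration N L m₁ m₂ y) (i : ℤ) {K k : ℕ} {e : ℝ}
    (heK : e * N ≤ K + 1) (hk : k ∈ Finset.Ico (K + 1) (N - K)) :
    2 * m₁ / L * e ≤ sin (π * (y (i + k) - y i) / L) := by
  rw [Finset.mem_Ico] at hk
  have K_lt : (K : ℝ) + 1 ≤ k := mod_cast hk.1
  have lt_sub : (k : ℝ) + (K + 1) ≤ N := mod_cast (show k + (K + 1) ≤ N by omega)
  refine h.mul_le_sin (by omega) (by omega) ?_ ?_ <;>
    rw [le_div_iff₀ h.cast_size_pos] <;> push_cast <;> linarith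

lemma abs_angle_sub_angle_le (h : IsStepConfiguration N L m₁ m₂ y) (i : ℤ) (k : ℕ) :
    |π * (y (i + k) - y i) / L - π * (y i - y (i - k)) / L| ≤ π * m₂ / L * (k / N) ^ 2 := by
  have L_pos := h.length_pos
  rw [show π * (y (i + k) - y i) / L - π * (y i - y (i - k)) / L
      = π / L * (y (i + k) + y (i - k) - 2 * y i) by ring, abs_mul, abs_of_pos (by positivity),
    show π * m₂ / L * (k / N : ℝ) ^ 2 = π / L * (m₂ * (k / N) ^ 2) by ring]
  gcongr
  exact h.abs_second_diff_le i k

lemma angle_add_period (h : IsStepConfiguration N L m₁ m₂ y) (i j : ℤ) :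
    π * (y (j + N) - y i) / L = π * (y j - y i) / L + π := by
  have L_pos := h.length_pos
  rw [h.add_period]
  field_simp
  ring

lemma cot_periodic (h : IsStepConfiguration N L m₁ m₂ y) (i : ℤ) :
    Function.Periodic (fun j => Real.cot (π * (y j - y i) / L)) (N : ℤ) := fun j => by
  simp only [h.angle_add_period, Real.cot_eq_cos_div_sin, cos_add_pi, sin_add_pi, neg_div_neg_eq]

lemma sin_sq_periodic (h : IsStepConfiguration N L m₁ m₂ y) (i : ℤ) :
    Function.Periodic (fun j => sin (π * (y j - y i) / L) ^ 2) (N : ℤ) := fun j => by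
  simp only [h.angle_add_period, sin_add_pi, neg_sq]

lemma exists_cutoff (h : IsStepConfiguration N L m₁ m₂ y) {e : ℝ} (he : 0 ≤ e) (he' : e < 1 / 2) :
    ∃ K : ℕ, 2 * K < N ∧ K ≤ e * N ∧ e * N ≤ K + 1 := by
  have N_pos := h.cast_size_pos
  have floor_le : (⌊e * N⌋₊ : ℝ) ≤ e * N := Nat.floor_le (by positivity)
  refine ⟨⌊e * N⌋₊, ?_, floor_le, (Nat.lt_floor_add_one _).le⟩
  have : (2 : ℝ) * ⌊e * N⌋₊ < N := by nlinarith
  exact_mod_cast this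

lemma abs_cot_add_cot_le (h : IsStepConfiguration N L m₁ m₂ y) (i : ℤ) {k : ℕ} (hk₀ : 0 < k)
    (hk : 2 * k ≤ N) :
    |Real.cot (π * (y (i + k) - y i) / L) + Real.cot (π * (y (i - k) - y i) / L)| ≤
      π * m₂ / L / (2 * m₁ / L) ^ 2 := by
  have N_pos := h.cast_size_pos
  have m₁_pos := h.lower_pos
  have L_pos := h.length_pos
  have sin_left := h.mul_le_sin_of_two_mul_le (i - k) hk
  rw [sub_add_cancel] at sin_left
  have odd : Real.cot (π * (y (i - k) - y i) / L) = -Real.cot (π * (y i - y (i - k)) / L) := by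
    rw [show π * (y (i - k) - y i) / L = -(π * (y i - y (i - k)) / L) by ring,
      Real.cot_eq_cos_div_sin, Real.cot_eq_cos_div_sin, cos_neg, sin_neg, div_neg]
  rw [odd, ← sub_eq_add_neg]
  refine (abs_cot_sub_cot_le (by positivity) (h.mul_le_sin_of_two_mul_le i hk) sin_left).trans ?_
  rw [div_le_iff₀ (by positivity)]
  refine (h.abs_angle_sub_angle_le i k).trans_eq ?_
  field_simp

lemma abs_sum_cot_le (h : IsStepConfiguration N L m₁ m₂ y) (i : ℤ) :
    |∑ j ∈ Finset.Ico (i + 1) (i + N), Real.cot (π * (y j - y i) / L)| ≤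
      N * (π * m₂ / L / (2 * m₁ / L) ^ 2 + 1 / (2 * m₁ / L * (1 / 4))) := by
  obtain ⟨K, hKN, -, heK⟩ := h.exists_cutoff (e := 1 / 4) (by norm_num) (by norm_num)
  have m₁_pos := h.lower_pos
  have m₂_pos := h.upper_pos
  have L_pos := h.length_pos
  have near (k) (hk : k ∈ Finset.Ico 1 (K + 1)) :
      |Real.cot (π * (y (i + (k : ℕ)) - y i) / L) + Real.cot (π * (y (i - (k : ℕ)) - y i) / L)| ≤
        π * m₂ / L / (2 * m₁ / L) ^ 2 := by
    rw [Finset.mem_Ico] at hk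
    exact h.abs_cot_add_cot_le i (by omega) (by omega)
  have far (k) (hk : k ∈ Finset.Ico (K + 1) (N - K)) :
      |Real.cot (π * (y (i + (k : ℕ)) - y i) / L)| ≤ 1 / (2 * m₁ / L * (1 / 4)) := by
    rw [Real.cot_eq_cos_div_sin]
    exact abs_div_le_div (by positivity) (abs_cos_le_one _) (h.mul_le_sin_of_mem_Ico i heK hk)
  refine (abs_sum_Ico_le_of_periodic hKN (h.cot_periodic i) i).trans ?_
  refine (add_le_add (Finset.sum_le_card_nsmul _ _ _ near)
    (Finset.sum_le_card_nsmul _ _ _ far)).trans ?_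
  simp only [Nat.card_Ico, nsmul_eq_mul, mul_add]
  gcongr <;> omega

lemma abs_pow_div_gap_pow_sub_le (h : IsStepConfiguration N L m₁ m₂ y) (n : ℕ) (i : ℤ) :
    |(N : ℝ)⁻¹ ^ n / (y (i + 1) - y i) ^ (n + 1) - (N : ℝ)⁻¹ ^ n / (y i - y (i - 1)) ^ (n + 1)| ≤
      (n + 1) * m₂ / m₁ ^ (n + 2) := by
  have le_prev := h.le_gap (i - 1)
  have second_diff := h.abs_second_diff_le i 1
  rw [sub_add_cancel] at le_prev
  refine abs_pow_div_pow_sub_pow_div_pow_le (inv_pos.2 h.cast_size_pos) h.lower_pos (h.le_gap i)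
    le_prev ?_ n
  simp only [Nat.cast_one, one_div] at second_diff
  convert second_diff using 2
  ring

lemma exists_abs_Mlin_le (L m₁ m₂ : ℝ) :
    ∃ C, ∀ N y, IsStepConfiguration N L m₁ m₂ y → ∀ i, |Mlin N L y i| ≤ C := by
  refine ⟨m₂ / m₁ ^ 2 + 3 * m₂ / m₁ ^ 4 +
    2 * π / L ^ 2 * (π * m₂ / L / (2 * m₁ / L) ^ 2 + 1 / (2 * m₁ / L * (1 / 4))),
    fun N y h i => ?_⟩
  have N_pos := h.cast_size_pos
  have first := h.abs_pow_div_gap_pow_sub_le 0 i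
  have third := h.abs_pow_div_gap_pow_sub_le 2 i
  have sum_cot := h.abs_sum_cot_le i
  set S := ∑ j ∈ Finset.Ico (i + 1) (i + (N : ℤ)), Real.cot (π * (y j - y i) / L) with S_def
  have nonlocal : |2 * π / L ^ 2 * ((N : ℝ)⁻¹ * S)| ≤ 2 * π / L ^ 2 *
      (π * m₂ / L / (2 * m₁ / L) ^ 2 + 1 / (2 * m₁ / L * (1 / 4))) := by
    rw [abs_mul, abs_of_nonneg (by positivity : 0 ≤ 2 * π / L ^ 2), abs_mul,
      abs_of_pos (inv_pos.2 N_pos)]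
    gcongr
    rwa [inv_mul_le_iff₀ N_pos]
  norm_num at first third
  have split : Mlin N L y i = ((y (i + 1) - y i)⁻¹ - (y i - y (i - 1))⁻¹) +
      ((N ^ 2 : ℝ)⁻¹ / (y (i + 1) - y i) ^ 3 - (N ^ 2 : ℝ)⁻¹ / (y i - y (i - 1)) ^ 3) -
      2 * π / L ^ 2 * ((N : ℝ)⁻¹ * S) := by
    simp only [Mlin, S_def]
    ring
  rw [split]
  exact (abs_sub _ _).trans (add_le_add ((abs_add_le _ _).trans (add_le_add first third)) nonlocal)

end IsStepConfiguration

/-- The difference quotient `(z_{i+1} - z_i) / (y_{i+1} - y_i)` of a perturbation `z` with respect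
to the configuration `y`. -/
noncomputable def relSlope (y z : ℤ → ℝ) (i : ℤ) : ℝ :=
  (z (i + 1) - z i) / (y (i + 1) - y i)

/-- The second difference of `z` relative to `y`, scaled by `1 / a = N`; it is the quantity that the
principal part of the linearized operator dissipates. -/
noncomputable def relCurvature (N : ℕ) (y z : ℤ → ℝ) (i : ℤ) : ℝ :=
  N * (relSlope y z i - relSlope y z (i - 1))

/-- The lattice sum in `Tlin`: the linearization of the elastic interaction. -/
noncomputable def nonlocalSum (N : ℕ) (L : ℝ) (y z : ℤ → ℝ) (i : ℤ) : ℝ :=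
  ∑ j ∈ Finset.Ico (i + 1) (i + N), (z j - z i) / sin (π * (y j - y i) / L) ^ 2

lemma abs_relSlope_sub_le {N : ℕ} (hN : 0 < N) (y z : ℤ → ℝ) (i : ℤ) {m n r : ℤ}
    (hi : i ∈ Set.Icc m n) (hr : r ∈ Set.Icc m n) :
    |relSlope y z r - relSlope y z i| ≤
      (∑ l ∈ Finset.Ioc m n, |relCurvature N y z l|) / N := by
  refine (abs_sub_le_sum_Ioc_abs_sub_pred_of_mem_Icc _ hr hi).trans_eq ?_
  simp only [relCurvature, abs_mul, Nat.abs_cast, ← Finset.mul_sum]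
  field_simp

namespace IsStepConfiguration

variable {N : ℕ} {L m₁ m₂ : ℝ} {y z : ℤ → ℝ}

lemma relSlope_mul_gap (h : IsStepConfiguration N L m₁ m₂ y) (z : ℤ → ℝ) (i : ℤ) :
    relSlope y z i * (y (i + 1) - y i) = z (i + 1) - z i :=
  div_mul_cancel₀ _ (h.gap_pos i).ne'

lemma abs_sub_sub_mul_le (h : IsStepConfiguration N L m₁ m₂ y) {m n : ℤ} (hmn : m ≤ n) {c B : ℝ}
    (hB : ∀ r ∈ Set.Ico m n, |relSlope y z r - c| ≤ B) :
    |z n - z m - c * (y n - y m)| ≤ B * (y n - y m) := by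
  induction n, hmn using Int.leInduction with
  | base => simp
  | succ n hmn ih =>
    have split : z (n + 1) - z m - c * (y (n + 1) - y m) =
        (z n - z m - c * (y n - y m)) + (relSlope y z n - c) * (y (n + 1) - y n) := by
      linear_combination -h.relSlope_mul_gap z n
    have gap_pos := h.gap_pos n
    calc |z (n + 1) - z m - c * (y (n + 1) - y m)|
        ≤ |z n - z m - c * (y n - y m)| + |relSlope y z n - c| * (y (n + 1) - y n) := by
          rw [split, ← abs_of_pos gap_pos, ← abs_mul, abs_of_pos gap_pos]
          exact abs_add_le _ _
      _ ≤ B * (y n - y m) + B * (y (n + 1) - y n) := by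
          gcongr
          · exact ih fun r hr => hB r ⟨hr.1, hr.2.trans (Int.lt_succ n)⟩
          · exact hB n ⟨hmn, Int.lt_succ n⟩
      _ = B * (y (n + 1) - y m) := by ring

lemma abs_sub_div_sin_sq_sub_le (h : IsStepConfiguration N L m₁ m₂ y) (i : ℤ) {k : ℕ} (hk₀ : 0 < k)
    (hk : 2 * k ≤ N) :
    |(y (i + k) - y i) / sin (π * (y (i + k) - y i) / L) ^ 2 -
        (y i - y (i - k)) / sin (π * (y i - y (i - k)) / L) ^ 2| ≤
      L / π * (3 * (π * m₂ / L) ^ 3 / (2 * m₁ / L) ^ 4) := by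
  have N_pos := h.cast_size_pos
  have m₁_pos := h.lower_pos
  have L_pos := h.length_pos
  have sin_right := h.mul_le_sin_of_two_mul_le i hk
  have sin_left := h.mul_le_sin_of_two_mul_le (i - k) hk
  rw [sub_add_cancel] at sin_left
  have angle_mem {m n : ℤ} (hmn : m ≤ n) (hn : ((n : ℝ) - m) / N = k / N) :
      0 ≤ π * (y n - y m) / L ∧ π * (y n - y m) / L ≤ π * m₂ / L * (k / N) := by
    have le := h.lower_mul_le_sub hmn
    have ge := h.sub_le_upper_mul hmn
    rw [hn] at le ge
    have sub_nonneg : 0 ≤ y n - y m := le_trans (by positivity) le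
    refine ⟨by positivity, ?_⟩
    rw [show π * m₂ / L * (k / N : ℝ) = π * (m₂ * (k / N)) / L by ring]
    gcongr
  obtain ⟨right_nonneg, right_le⟩ := angle_mem (m := i) (n := i + k) (by omega) (by simp)
  obtain ⟨left_nonneg, left_le⟩ := angle_mem (m := i - k) (n := i) (by omega) (by simp)
  have unscale (x s : ℝ) : x / s = L / π * (π * x / L / s) := by field_simp
  rw [unscale, unscale (y i - _), ← mul_sub, abs_mul, abs_of_pos (by positivity : 0 < L / π)]
  gcongr
  refine (abs_div_sin_sq_sub_div_sin_sq_le (by positivity) sin_right sin_left right_nonneg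
    left_nonneg right_le left_le).trans ?_
  rw [div_le_iff₀ (by positivity)]
  calc _ ≤ 3 * (π * m₂ / L * (k / N)) ^ 2 * (π * m₂ / L * (k / N) ^ 2) := by
        gcongr
        exact h.abs_angle_sub_angle_le i k
    _ = _ := by field_simp

lemma abs_taylor_remainder_div_sin_sq_le (h : IsStepConfiguration N L m₁ m₂ y) {i m : ℤ} {k : ℕ}
    (hk₀ : 0 < k) (hk : 2 * k ≤ N) (hm : m ∈ Set.Icc (i - k) i) :
    |(z (m + k) - z m - relSlope y z i * (y (m + k) - y m)) /
        sin (π * (y (m + k) - y m) / L) ^ 2| ≤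
      m₂ / (2 * m₁ / L) ^ 2 * ((∑ l ∈ Finset.Ioc (i - k) (i + k), |relCurvature N y z l|) / k) := by
  have N_pos := h.cast_size_pos
  have m₁_pos := h.lower_pos
  have L_pos := h.length_pos
  set S := ∑ l ∈ Finset.Ioc (i - k) (i + (k : ℤ)), |relCurvature N y z l|
  have S_nonneg : 0 ≤ S := Finset.sum_nonneg fun _ _ => abs_nonneg _
  have slope_near (r : ℤ) (hr : r ∈ Set.Ico m (m + k)) :
      |relSlope y z r - relSlope y z i| ≤ S / N :=
    abs_relSlope_sub_le h.size_pos y z i ⟨by omega, by omega⟩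
      ⟨hm.1.trans hr.1, hr.2.le.trans (by linarith [hm.2])⟩
  have sub_le := h.sub_le_upper_mul (i := m) (j := m + k) (by omega)
  rw [Int.cast_add, add_sub_cancel_left, Int.cast_natCast] at sub_le
  have remainder := (h.abs_sub_sub_mul_le (n := m + k) (by omega) slope_near).trans
    (mul_le_mul_of_nonneg_left sub_le (div_nonneg S_nonneg N_pos.le))
  have sin_sq := pow_le_pow_left₀ (by positivity) (h.mul_le_sin_of_two_mul_le m hk) 2
  refine (abs_div_le_div (by positivity) remainder sin_sq).trans_eq ?_
  field_simp

lemma exists_abs_symm_pair_le {L m₁ m₂ : ℝ} (hL : 0 < L) (hm₁ : 0 < m₁) (hm₂ : 0 < m₂) :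
    ∃ D > 0, ∃ E > 0, ∀ N y z, IsStepConfiguration N L m₁ m₂ y → ∀ (i : ℤ) (k : ℕ), 0 < k →
      2 * k ≤ N →
      |(z (i + k) - z i) / sin (π * (y (i + k) - y i) / L) ^ 2 +
          (z (i - k) - z i) / sin (π * (y (i - k) - y i) / L) ^ 2| ≤
        D * |relSlope y z i| +
          E * ((∑ l ∈ Finset.Ioc (i - k) (i + k), |relCurvature N y z l|) / k) := by
  refine ⟨L / π * (3 * (π * m₂ / L) ^ 3 / (2 * m₁ / L) ^ 4), by positivity,
    2 * (m₂ / (2 * m₁ / L) ^ 2), by positivity, fun N y z h i k hk₀ hk => ?_⟩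
  have linear := h.abs_sub_div_sin_sq_sub_le i hk₀ hk
  have right := h.abs_taylor_remainder_div_sin_sq_le (z := z) (m := i) hk₀ hk ⟨by omega, le_rfl⟩
  have left := h.abs_taylor_remainder_div_sin_sq_le (z := z) (m := i - k) hk₀ hk
    ⟨le_rfl, by omega⟩
  rw [sub_add_cancel] at left
  rw [show π * (y (i - k) - y i) / L = -(π * (y i - y (i - k)) / L) by ring, sin_neg, neg_sq]
  set s := sin (π * (y (i + k) - y i) / L) ^ 2
  set t := sin (π * (y i - y (i - k)) / L) ^ 2
  have split : (z (i + k) - z i) / s + (z (i - k) - z i) / t =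
      relSlope y z i * ((y (i + k) - y i) / s - (y i - y (i - k)) / t) +
        ((z (i + k) - z i - relSlope y z i * (y (i + k) - y i)) / s -
          (z i - z (i - k) - relSlope y z i * (y i - y (i - k))) / t) := by ring
  rw [split]
  refine (abs_add_le _ _).trans (add_le_add ?_ ?_)
  · rw [abs_mul, mul_comm]
    gcongr
  · exact (abs_sub _ _).trans (by linarith)

lemma abs_sub_div_sin_sq_le (h : IsStepConfiguration N L m₁ m₂ y) (z : ℤ → ℝ) (i : ℤ) {K k : ℕ}
    {e : ℝ} (he : 0 < e) (heK : e * N ≤ K + 1) (hk : k ∈ Finset.Ico (K + 1) (N - K)) :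
    |(z (i + k) - z i) / sin (π * (y (i + k) - y i) / L) ^ 2| ≤
      ((2 * m₁ / L * e) ^ 2)⁻¹ * (|z (i + k)| + |z i|) := by
  have m₁_pos := h.lower_pos
  have L_pos := h.length_pos
  rw [inv_mul_eq_div]
  exact abs_div_le_div (by positivity) (abs_sub _ _)
    (pow_le_pow_left₀ (by positivity) (h.mul_le_sin_of_mem_Ico i heK hk) 2)

lemma relSlope_periodic (h : IsStepConfiguration N L m₁ m₂ y)
    (hz : Function.Periodic z (N : ℤ)) : Function.Periodic (relSlope y z) (N : ℤ) := fun i => by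
  simp only [relSlope, add_right_comm i (N : ℤ) 1, h.add_period, hz i, hz (i + 1),
    add_sub_add_right_eq_sub]

lemma relCurvature_periodic (h : IsStepConfiguration N L m₁ m₂ y)
    (hz : Function.Periodic z (N : ℤ)) :
    Function.Periodic (relCurvature N y z) (N : ℤ) := fun i => by
  simp only [relCurvature, add_sub_right_comm i (N : ℤ) 1, h.relSlope_periodic hz i,
    h.relSlope_periodic hz (i - 1)]

lemma periodSeminorm_near_le (h : IsStepConfiguration N L m₁ m₂ y)
    (hz : Function.Periodic z (N : ℤ)) {D E : ℝ} (hD : 0 ≤ D) (hE : 0 ≤ E) {k : ℕ} (hk : 0 < k) :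
    periodSeminorm N (fun i => D * |relSlope y z i| +
        E * ((∑ l ∈ Finset.Ioc (i - k) (i + k), |relCurvature N y z l|) / k)) ≤
      D * periodSeminorm N (relSlope y z) + E * (2 * periodSeminorm N (relCurvature N y z)) := by
  refine (periodSeminorm_add_le _ _).trans ?_
  simp only [div_eq_inv_mul]
  rw [periodSeminorm_const_mul hD, periodSeminorm_const_mul hE,
    periodSeminorm_const_mul (by positivity), periodSeminorm_abs]
  refine add_le_add le_rfl (mul_le_mul_of_nonneg_left ?_ hE)
  rw [inv_mul_le_iff₀ (by positivity)]
  exact (periodSeminorm_sum_Ioc_abs_le (h.relCurvature_periodic hz) k).trans_eq (by ring)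

lemma exists_abs_nonlocalSum_le {L m₁ m₂ : ℝ} (hL : 0 < L) (hm₁ : 0 < m₁) (hm₂ : 0 < m₂) :
    ∃ D > 0, ∃ E > 0, ∀ N y z, IsStepConfiguration N L m₁ m₂ y → Function.Periodic z (N : ℤ) →
      ∀ e : ℝ, 0 < e → ∀ K : ℕ, 2 * K < N → e * N ≤ K + 1 → ∀ i,
      |nonlocalSum N L y z i| ≤
        ∑ k ∈ Finset.Ico 1 (K + 1), (D * |relSlope y z i| +
          E * ((∑ l ∈ Finset.Ioc (i - (k : ℕ)) (i + (k : ℕ)), |relCurvature N y z l|) / k)) +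
        ∑ k ∈ Finset.Ico (K + 1) (N - K),
          ((2 * m₁ / L * e) ^ 2)⁻¹ * (|z (i + (k : ℕ))| + |z i|) := by
  obtain ⟨D, D_pos, E, E_pos, pair_le⟩ := exists_abs_symm_pair_le hL hm₁ hm₂
  refine ⟨D, D_pos, E, E_pos, fun N y z h hz e he K hKN heK i => ?_⟩
  have periodic : Function.Periodic
      (fun j => (z j - z i) / sin (π * (y j - y i) / L) ^ 2) (N : ℤ) := fun j => by
    simp only [hz j, h.sin_sq_periodic i j]
  refine (abs_sum_Ico_le_of_periodic hKN periodic i).trans ?_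
  gcongr with k hk k hk
  · rw [Finset.mem_Ico] at hk
    exact pair_le N y z h i k (by omega) (by omega)
  · exact h.abs_sub_div_sin_sq_le z i he heK hk

lemma exists_periodSeminorm_nonlocalSum_le_of_cutoff {L m₁ m₂ : ℝ} (hL : 0 < L) (hm₁ : 0 < m₁)
    (hm₂ : 0 < m₂) :
    ∃ D > 0, ∃ E > 0, ∀ e > 0, e < 1 / 2 → ∀ N y z, IsStepConfiguration N L m₁ m₂ y →
      Function.Periodic z (N : ℤ) →
      periodSeminorm N (nonlocalSum N L y z) ≤
        N * (e * (D * periodSeminorm N (relSlope y z) +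
            E * (2 * periodSeminorm N (relCurvature N y z))) +
          ((2 * m₁ / L * e) ^ 2)⁻¹ * (2 * periodSeminorm N z)) := by
  obtain ⟨D, D_pos, E, E_pos, pointwise⟩ := exists_abs_nonlocalSum_le hL hm₁ hm₂
  refine ⟨D, D_pos, E, E_pos, fun e he he' N y z h hz => ?_⟩
  obtain ⟨K, hKN, hKe, heK⟩ := h.exists_cutoff he.le he'
  refine (periodSeminorm_mono (pointwise N y z h hz e he K hKN heK)).trans <|
    (periodSeminorm_add_le _ _).trans <|
    (add_le_add (periodSeminorm_sum_le _ _) (periodSeminorm_sum_le _ _)).trans ?_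
  have near_sum := Finset.sum_le_card_nsmul (Finset.Ico 1 (K + 1)) _ _ fun k hk =>
    h.periodSeminorm_near_le hz D_pos.le E_pos.le (Finset.mem_Ico.1 hk).1
  have far_sum := Finset.sum_le_card_nsmul (Finset.Ico (K + 1) (N - K)) _ _ fun k _ =>
    periodSeminorm_const_mul_abs_add_abs_le hz
      (inv_nonneg.2 (sq_nonneg (2 * m₁ / L * e))) (k : ℤ)
  refine (add_le_add near_sum far_sum).trans ?_
  simp only [Nat.card_Ico, nsmul_eq_mul, Nat.add_sub_cancel]
  rw [mul_add (N : ℝ)]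
  refine add_le_add ?_ (by gcongr; omega)
  rw [← mul_assoc (N : ℝ), mul_comm (N : ℝ) e]
  exact mul_le_mul_of_nonneg_right hKe (by positivity)

lemma exists_periodSeminorm_nonlocalSum_le {L m₁ m₂ ε : ℝ} (hL : 0 < L) (hm₁ : 0 < m₁)
    (hm₂ : 0 < m₂) (hε : 0 < ε) :
    ∃ A B, ∀ N y z, IsStepConfiguration N L m₁ m₂ y → Function.Periodic z (N : ℤ) →
      periodSeminorm N (nonlocalSum N L y z) ≤
        N * (ε * periodSeminorm N (relCurvature N y z) + A * periodSeminorm N (relSlope y z) +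
          B * periodSeminorm N z) := by
  obtain ⟨D, -, E, E_pos, bound⟩ := exists_periodSeminorm_nonlocalSum_le_of_cutoff hL hm₁ hm₂
  set e := min (1 / 4) (ε / (2 * E))
  have e_pos : 0 < e := by positivity
  have e_le : e * (2 * E) ≤ ε := (le_div_iff₀ (by positivity)).1 (min_le_right _ _)
  have e_lt : e < 1 / 2 := (min_le_left _ _).trans_lt (by norm_num)
  refine ⟨e * D, ((2 * m₁ / L * e) ^ 2)⁻¹ * 2,
    fun N y z h hz => (bound e e_pos e_lt N y z h hz).trans ?_⟩
  refine mul_le_mul_of_nonneg_left ?_ (Nat.cast_nonneg N)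
  linarith [mul_le_mul_of_nonneg_right e_le (apply_nonneg (periodSeminorm N) (relCurvature N y z))]

end IsStepConfiguration

/-- The coefficient `1 / h + 3 a² / h³`, `h = y_{i+1} - y_i`, with which the nearest-neighbour
interaction enters `Tlin`: its local part is minus the backward difference of stiffness times
`relSlope`. -/
noncomputable def bondStiffness (N : ℕ) (y : ℤ → ℝ) (i : ℤ) : ℝ :=
  1 / (y (i + 1) - y i) + 3 * ((N : ℝ)⁻¹ ^ 2 / (y (i + 1) - y i) ^ 3)

/-- The flux of the linearized system, so that `Zrhs` is `N` times its backward difference. -/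
noncomputable def linFlux (N : ℕ) (L : ℝ) (y z : ℤ → ℝ) (i : ℤ) : ℝ :=
  (Tlin N L y z (i + 1) - Tlin N L y z i) / (y (i + 1) - y i) -
    relSlope y z i / (y (i + 1) - y i) * (Mlin N L y (i + 1) - Mlin N L y i)

lemma Zrhs_eq (N : ℕ) (L : ℝ) (y z : ℤ → ℝ) (i : ℤ) :
    Zrhs N L y z i = N * (linFlux N L y z i - linFlux N L y z (i - 1)) := by
  simp only [Zrhs, linFlux, relSlope, sub_add_cancel, div_div, ← sq]
  ring

namespace IsStepConfiguration

variable {N : ℕ} {L m₁ m₂ : ℝ} {y z : ℤ → ℝ}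

lemma Tlin_eq (h : IsStepConfiguration N L m₁ m₂ y) (z : ℤ → ℝ) (i : ℤ) :
    Tlin N L y z i =
      -(bondStiffness N y i * relSlope y z i - bondStiffness N y (i - 1) * relSlope y z (i - 1)) +
        2 * π ^ 2 / L ^ 3 * ((N : ℝ)⁻¹ * nonlocalSum N L y z i) := by
  have gap_ne := (h.gap_pos i).ne'
  have prev_gap_ne := (h.gap_pos (i - 1)).ne'
  simp only [Tlin, bondStiffness, relSlope, nonlocalSum, sub_add_cancel] at prev_gap_ne ⊢
  field_simp
  ring

lemma div_upper_le_bondStiffness (h : IsStepConfiguration N L m₁ m₂ y) (i : ℤ) :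
    N / m₂ ≤ bondStiffness N y i := by
  have gap_pos := h.gap_pos i
  calc (N : ℝ) / m₂ = 1 / (m₂ / N) := (one_div_div _ _).symm
    _ ≤ 1 / (y (i + 1) - y i) := one_div_le_one_div_of_le gap_pos (h.gap_le i)
    _ ≤ bondStiffness N y i := le_add_of_nonneg_right (by positivity)

lemma abs_bondStiffness_sub_pred_le (h : IsStepConfiguration N L m₁ m₂ y) (i : ℤ) :
    |bondStiffness N y i - bondStiffness N y (i - 1)| ≤ m₂ / m₁ ^ 2 + 9 * m₂ / m₁ ^ 4 := by
  have first := h.abs_pow_div_gap_pow_sub_le 0 i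
  have third := h.abs_pow_div_gap_pow_sub_le 2 i
  simp only [bondStiffness, sub_add_cancel]
  rw [add_sub_add_comm, ← mul_sub]
  refine (abs_add_le _ _).trans (add_le_add (by simpa using first) ?_)
  rw [abs_mul, abs_of_pos three_pos]
  exact (mul_le_mul_of_nonneg_left third zero_le_three).trans_eq (by push_cast; ring)

lemma Tlin_mul_relCurvature_le (h : IsStepConfiguration N L m₁ m₂ y) (z : ℤ → ℝ) (i : ℤ) :
    Tlin N L y z i * relCurvature N y z i ≤
      -(1 / m₂) * relCurvature N y z i ^ 2 +
        (m₂ / m₁ ^ 2 + 9 * m₂ / m₁ ^ 4) * (|relCurvature N y z i| * |relSlope y z (i + -1)|) +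
        2 * π ^ 2 / L ^ 3 * (N : ℝ)⁻¹ *
          (|relCurvature N y z i| * |nonlocalSum N L y z (i + 0)|) := by
  have N_pos := h.cast_size_pos
  have L_pos := h.length_pos
  rw [h.Tlin_eq, ← sub_eq_add_neg, add_zero, ← abs_mul, ← abs_mul]
  have stiffness_le := h.div_upper_le_bondStiffness i
  have stiffness_diff := h.abs_bondStiffness_sub_pred_le i
  have slope_diff : relSlope y z i = relSlope y z (i - 1) + (N : ℝ)⁻¹ * relCurvature N y z i := by
    rw [relCurvature, inv_mul_cancel_left₀ N_pos.ne', add_sub_cancel]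
  rw [slope_diff]
  generalize relSlope y z (i - 1) = v
  generalize relCurvature N y z i = q
  generalize bondStiffness N y i = g at *
  generalize bondStiffness N y (i - 1) = g' at *
  generalize nonlocalSum N L y z i = S
  have dissipation : 1 / m₂ * q ^ 2 ≤ (N : ℝ)⁻¹ * g * q ^ 2 := by
    gcongr
    rw [inv_mul_eq_div, le_div_iff₀ N_pos]
    exact (one_div_mul_eq_div _ _).trans_le stiffness_le
  have transport : -(g - g') * (q * v) ≤ (m₂ / m₁ ^ 2 + 9 * m₂ / m₁ ^ 4) * |q * v| := by
    refine (le_abs_self _).trans ?_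
    rw [abs_mul, abs_neg]
    gcongr
  have nonlocal : 2 * π ^ 2 / L ^ 3 * (N : ℝ)⁻¹ * (q * S) ≤
      2 * π ^ 2 / L ^ 3 * (N : ℝ)⁻¹ * |q * S| := by
    gcongr
    exact le_abs_self _
  linear_combination dissipation + transport + nonlocal

lemma Mlin_periodic (h : IsStepConfiguration N L m₁ m₂ y) :
    Function.Periodic (Mlin N L y) (N : ℤ) := fun i => by
  simp only [Mlin, sum_Ico_add_period]
  simp only [add_right_comm i (N : ℤ) 1, add_sub_right_comm i (N : ℤ) 1, h.add_period,
    add_sub_add_right_eq_sub]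

lemma nonlocalSum_periodic (h : IsStepConfiguration N L m₁ m₂ y)
    (hz : Function.Periodic z (N : ℤ)) : Function.Periodic (nonlocalSum N L y z) (N : ℤ) :=
  fun i => by
    simp only [nonlocalSum, sum_Ico_add_period, h.add_period, hz _, add_sub_add_right_eq_sub]

lemma Tlin_periodic (h : IsStepConfiguration N L m₁ m₂ y) (hz : Function.Periodic z (N : ℤ)) :
    Function.Periodic (Tlin N L y z) (N : ℤ) := fun i => by
  simp only [Tlin, sum_Ico_add_period]
  simp only [add_right_comm i (N : ℤ) 1, add_sub_right_comm i (N : ℤ) 1, h.add_period, hz _,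
    add_sub_add_right_eq_sub]

lemma linFlux_periodic (h : IsStepConfiguration N L m₁ m₂ y) (hz : Function.Periodic z (N : ℤ)) :
    Function.Periodic (linFlux N L y z) (N : ℤ) := fun i => by
  simp only [linFlux, add_right_comm i (N : ℤ) 1, h.add_period, h.relSlope_periodic hz _,
    h.Tlin_periodic hz _, h.Mlin_periodic _, add_sub_add_right_eq_sub]

lemma sum_mul_Zrhs_eq (h : IsStepConfiguration N L m₁ m₂ y) (hz : Function.Periodic z (N : ℤ)) :
    ∑ i ∈ Finset.Icc (1 : ℤ) N, z i * Zrhs N L y z i =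
      ∑ i ∈ Finset.Icc (1 : ℤ) N, Tlin N L y z i * relCurvature N y z i -
        ∑ i ∈ Finset.Icc (1 : ℤ) N,
          Mlin N L y i * (relCurvature N y z i * (relSlope y z i + relSlope y z (i - 1))) := by
  set v := relSlope y z with v_def
  have v_periodic : Function.Periodic v (N : ℤ) := h.relSlope_periodic hz
  have by_parts := sum_Icc_mul_sub_pred_of_periodic hz (h.linFlux_periodic hz)
  have by_parts_T := sum_Icc_mul_sub_pred_of_periodic (h.Tlin_periodic hz) v_periodic
  have by_parts_M := sum_Icc_mul_sub_pred_of_periodic (g := fun i => v i ^ 2) h.Mlin_periodic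
    fun i => by simp only [v_periodic i]
  have flux_mul (i : ℤ) : (z (i + 1) - z i) * linFlux N L y z i =
      (Tlin N L y z (i + 1) - Tlin N L y z i) * v i -
        (Mlin N L y (i + 1) - Mlin N L y i) * v i ^ 2 := by
    have gap_ne := (h.gap_pos i).ne'
    rw [← h.relSlope_mul_gap, linFlux, ← v_def]
    field_simp
  calc ∑ i ∈ Finset.Icc (1 : ℤ) N, z i * Zrhs N L y z i
      = N * ∑ i ∈ Finset.Icc (1 : ℤ) N, z i * (linFlux N L y z i - linFlux N L y z (i - 1)) := by
        simp only [Zrhs_eq, Finset.mul_sum, mul_left_comm]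
    _ = N * (∑ i ∈ Finset.Icc (1 : ℤ) N, Tlin N L y z i * (v i - v (i - 1)) -
          ∑ i ∈ Finset.Icc (1 : ℤ) N, Mlin N L y i * (v i ^ 2 - v (i - 1) ^ 2)) := by
        rw [by_parts, by_parts_T, by_parts_M]
        simp only [flux_mul, Finset.sum_sub_distrib]
        ring
    _ = _ := by
        simp only [mul_sub (N : ℝ), Finset.mul_sum, relCurvature, ← v_def]
        congr 1 <;> exact Finset.sum_congr rfl fun i _ => by ring

lemma lower_mul_periodSeminorm_relSlope_sq_le (h : IsStepConfiguration N L m₁ m₂ y)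
    (hz : Function.Periodic z (N : ℤ)) :
    m₁ * periodSeminorm N (relSlope y z) ^ 2 ≤
      periodSeminorm N (relCurvature N y z) * periodSeminorm N z := by
  have N_pos := h.cast_size_pos
  have lower (i : ℤ) : m₁ * relSlope y z i ^ 2 ≤ N * ((z (i + 1) - z i) * relSlope y z i) := by
    have gap := (div_le_iff₀' N_pos).1 (h.le_gap i)
    rw [← h.relSlope_mul_gap]
    linarith [mul_le_mul_of_nonneg_right gap (sq_nonneg (relSlope y z i))]
  calc m₁ * periodSeminorm N (relSlope y z) ^ 2
      = ∑ i ∈ Finset.Icc (1 : ℤ) N, m₁ * relSlope y z i ^ 2 := by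
        rw [periodSeminorm_sq, Finset.mul_sum]
    _ ≤ N * ∑ i ∈ Finset.Icc (1 : ℤ) N, (z (i + 1) - z i) * relSlope y z i := by
        rw [Finset.mul_sum]
        exact Finset.sum_le_sum fun i _ => lower i
    _ = -∑ i ∈ Finset.Icc (1 : ℤ) N, relCurvature N y z i * z i := by
        rw [← neg_neg (∑ i ∈ Finset.Icc (1 : ℤ) N, (z (i + 1) - z i) * relSlope y z i),
          ← sum_Icc_mul_sub_pred_of_periodic hz (h.relSlope_periodic hz), mul_neg, Finset.mul_sum]
        simp only [relCurvature, mul_assoc, mul_comm (z _)]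
    _ ≤ ∑ i ∈ Finset.Icc (1 : ℤ) N, |relCurvature N y z i| * |z (i + 0)| := by
        simp only [add_zero, ← abs_mul]
        exact (neg_le_abs _).trans (Finset.abs_sum_le_sum_abs _ _)
    _ ≤ _ := sum_abs_mul_abs_comp_add_le _ hz 0

lemma sum_Tlin_mul_relCurvature_le (h : IsStepConfiguration N L m₁ m₂ y)
    (hz : Function.Periodic z (N : ℤ)) :
    ∑ i ∈ Finset.Icc (1 : ℤ) N, Tlin N L y z i * relCurvature N y z i ≤
      periodSeminorm N (relCurvature N y z) *
        (-(1 / m₂) * periodSeminorm N (relCurvature N y z) +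
          (m₂ / m₁ ^ 2 + 9 * m₂ / m₁ ^ 4) * periodSeminorm N (relSlope y z) +
          2 * π ^ 2 / L ^ 3 * (N : ℝ)⁻¹ * periodSeminorm N (nonlocalSum N L y z)) := by
  have L_pos := h.length_pos
  have m₁_pos := h.lower_pos
  have m₂_pos := h.upper_pos
  refine (Finset.sum_le_sum fun i _ => h.Tlin_mul_relCurvature_le z i).trans ?_
  rw [Finset.sum_add_distrib, Finset.sum_add_distrib, ← Finset.mul_sum, ← Finset.mul_sum,
    ← Finset.mul_sum, ← periodSeminorm_sq, mul_add, mul_add]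
  refine add_le_add (add_le_add (by linarith) ?_) ?_ <;> rw [mul_left_comm] <;> gcongr
  · exact sum_abs_mul_abs_comp_add_le _ (h.relSlope_periodic hz) (-1)
  · exact sum_abs_mul_abs_comp_add_le _ (h.nonlocalSum_periodic hz) 0

lemma neg_sum_Mlin_mul_le (h : IsStepConfiguration N L m₁ m₂ y)
    (hz : Function.Periodic z (N : ℤ)) {C : ℝ} (hC : ∀ i, |Mlin N L y i| ≤ C) :
    -∑ i ∈ Finset.Icc (1 : ℤ) N,
        Mlin N L y i * (relCurvature N y z i * (relSlope y z i + relSlope y z (i - 1))) ≤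
      2 * C * (periodSeminorm N (relCurvature N y z) * periodSeminorm N (relSlope y z)) := by
  have C_nonneg : 0 ≤ C := (abs_nonneg _).trans (hC 0)
  have current := sum_abs_mul_abs_comp_add_le (relCurvature N y z) (h.relSlope_periodic hz) 0
  have previous := sum_abs_mul_abs_comp_add_le (relCurvature N y z) (h.relSlope_periodic hz) (-1)
  calc _ ≤ ∑ i ∈ Finset.Icc (1 : ℤ) N,
        |Mlin N L y i * (relCurvature N y z i * (relSlope y z i + relSlope y z (i - 1)))| :=
        (neg_le_abs _).trans (Finset.abs_sum_le_sum_abs _ _)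
    _ ≤ ∑ i ∈ Finset.Icc (1 : ℤ) N, C * (|relCurvature N y z i| * |relSlope y z (i + 0)| +
          |relCurvature N y z i| * |relSlope y z (i + -1)|) := by
        refine Finset.sum_le_sum fun i _ => ?_
        rw [abs_mul, abs_mul, ← mul_add, add_zero, ← sub_eq_add_neg]
        gcongr
        · exact hC i
        · exact abs_add_le _ _
    _ ≤ C * (periodSeminorm N (relCurvature N y z) * periodSeminorm N (relSlope y z) +
          periodSeminorm N (relCurvature N y z) * periodSeminorm N (relSlope y z)) := by
        rw [← Finset.mul_sum, Finset.sum_add_distrib]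
        gcongr
    _ = _ := by ring

lemma exists_sum_mul_Zrhs_le_of_relCurvature {L m₁ m₂ : ℝ} (hL : 0 < L) (hm₁ : 0 < m₁)
    (hm₂ : 0 < m₂) :
    ∃ A B, ∀ N y z, IsStepConfiguration N L m₁ m₂ y → Function.Periodic z (N : ℤ) →
      ∑ i ∈ Finset.Icc (1 : ℤ) N, z i * Zrhs N L y z i ≤
        -(1 / (2 * m₂)) * periodSeminorm N (relCurvature N y z) ^ 2 +
          (A * periodSeminorm N (relCurvature N y z) * periodSeminorm N (relSlope y z) +
            B * periodSeminorm N (relCurvature N y z) * periodSeminorm N z) := by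
  set κ := 2 * π ^ 2 / L ^ 3
  have κ_pos : 0 < κ := by positivity
  obtain ⟨A, B, nonlocal_le⟩ := exists_periodSeminorm_nonlocalSum_le hL hm₁ hm₂
    (show 0 < 1 / (2 * m₂) / κ by positivity)
  obtain ⟨C, Mlin_le⟩ := exists_abs_Mlin_le L m₁ m₂
  refine ⟨m₂ / m₁ ^ 2 + 9 * m₂ / m₁ ^ 4 + κ * A + 2 * C, κ * B, fun N y z h hz => ?_⟩
  have T_part := h.sum_Tlin_mul_relCurvature_le hz
  have M_part := h.neg_sum_Mlin_mul_le hz (Mlin_le N y h)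
  have nonlocal := nonlocal_le N y z h hz
  rw [h.sum_mul_Zrhs_eq hz]
  have q_nonneg : 0 ≤ periodSeminorm N (relCurvature N y z) := apply_nonneg _ _
  generalize periodSeminorm N (relCurvature N y z) = q at *
  generalize periodSeminorm N (relSlope y z) = v at *
  generalize periodSeminorm N z = w at *
  have nonlocal_part : q * (κ * (N : ℝ)⁻¹ * periodSeminorm N (nonlocalSum N L y z)) ≤
      q * (κ * (1 / (2 * m₂) / κ * q + A * v + B * w)) := by
    rw [mul_assoc κ]
    gcongr
    rwa [inv_mul_le_iff₀ h.cast_size_pos]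
  have absorb : κ * (1 / (2 * m₂) / κ) = 1 / m₂ - 1 / (2 * m₂) := by field_simp; norm_num
  linear_combination T_part + M_part + nonlocal_part + q ^ 2 * absorb

end IsStepConfiguration

lemma mul_mul_le_half_mul_sq_add {δ : ℝ} (hδ : 0 < δ) (A x y : ℝ) :
    A * x * y ≤ δ / 2 * x ^ 2 + A ^ 2 / (2 * δ) * y ^ 2 := by
  have square : 0 ≤ (δ * x - A * y) ^ 2 / (2 * δ) := by positivity
  refine sub_nonneg.1 (square.trans_eq ?_)
  field_simp
  ring

lemma exists_mul_add_mul_le_of_mul_sq_le {m δ : ℝ} (hm : 0 < m) (hδ : 0 < δ) (A B : ℝ) :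
    ∃ C > 0, ∀ q v w : ℝ, m * v ^ 2 ≤ q * w →
      A * q * v + B * q * w ≤ δ * q ^ 2 + C * w ^ 2 := by
  set D := A ^ 2 / (2 * δ) / m + B
  refine ⟨D ^ 2 / (2 * δ) + 1, by positivity, fun q v w interpolation => ?_⟩
  have interpolated : A ^ 2 / (2 * δ) * v ^ 2 ≤ A ^ 2 / (2 * δ) / m * (q * w) := by
    rw [div_mul_eq_mul_div _ m, mul_div_assoc]
    gcongr
    rwa [le_div_iff₀' hm]
  have young_Aqv := mul_mul_le_half_mul_sq_add hδ A q v
  have young_Dqw := mul_mul_le_half_mul_sq_add hδ D q w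
  linear_combination young_Aqv + interpolated + young_Dqw + sq_nonneg w

namespace IsStepConfiguration

lemma exists_sum_mul_Zrhs_le {L m₁ m₂ : ℝ} (hL : 0 < L) (hm₁ : 0 < m₁) (hm₂ : 0 < m₂) :
    ∃ C > 0, ∀ N y z, IsStepConfiguration N L m₁ m₂ y → Function.Periodic z (N : ℤ) →
      ∑ i ∈ Finset.Icc (1 : ℤ) N, z i * Zrhs N L y z i ≤ C * periodSeminorm N z ^ 2 := by
  obtain ⟨A, B, energy_le⟩ := exists_sum_mul_Zrhs_le_of_relCurvature hL hm₁ hm₂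
  obtain ⟨C, C_pos, absorb⟩ :=
    exists_mul_add_mul_le_of_mul_sq_le hm₁ (show 0 < 1 / (2 * m₂) by positivity) A B
  refine ⟨C, C_pos, fun N y z h hz => (energy_le N y z h hz).trans ?_⟩
  linarith [absorb _ _ _ (h.lower_mul_periodSeminorm_relSlope_sq_le hz)]

end IsStepConfiguration

lemma abs_symm_second_diff_le {f : ℝ → ℝ} {K : ℝ} (hf : ContDiff ℝ 2 f)
    (hK : ∀ u, |deriv (deriv f) u| ≤ K) (x : ℝ) {s : ℝ} (hs : 0 ≤ s) :
    |f (x - s) + f (x + s) - 2 * f x| ≤ K * s ^ 2 := by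
  have f_diff : Differentiable ℝ f := hf.differentiable two_ne_zero
  have deriv_lipschitz (u w : ℝ) : |deriv f u - deriv f w| ≤ K * |u - w| :=
    convex_univ.norm_image_sub_le_of_norm_deriv_le (fun u _ => hf.differentiable_deriv_two u)
      (fun u _ => hK u) (Set.mem_univ w) (Set.mem_univ u)
  have hasDeriv (r : ℝ) : HasDerivAt (fun r => f (x - r) + f (x + r) - 2 * f x)
      (-deriv f (x - r) + deriv f (x + r)) r :=
    (((f_diff (x - r)).hasDerivAt.comp_const_sub x r).add
      ((f_diff (x + r)).hasDerivAt.comp_const_add x r)).sub_const _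
  have hasDeriv_bound (r : ℝ) : HasDerivAt (fun r => K * r ^ 2) (K * (2 * r)) r := by
    simpa using (hasDerivAt_pow 2 r).const_mul K
  refine image_norm_le_of_norm_deriv_right_le_deriv_boundary
    (fun r _ => (hasDeriv r).continuousAt.continuousWithinAt)
    (fun r _ => (hasDeriv r).hasDerivWithinAt) (by simp [two_mul]) hasDeriv_bound
    (fun r hr => ?_) (Set.right_mem_Icc.2 hs)
  have lipschitz := deriv_lipschitz (x + r) (x - r)
  rw [add_sub_sub_cancel, ← two_mul, abs_of_nonneg (mul_nonneg zero_le_two hr.1),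
    sub_eq_neg_add] at lipschitz
  exact lipschitz

lemma isStepConfiguration_of_profile {N : ℕ} (hN : 0 < N) {L m₁ m₂ : ℝ} (hm₁ : 0 < m₁)
    {f : ℝ → ℝ} (hf : ContDiff ℝ 2 f) (f_add_one : ∀ α, f (α + 1) = f α - L)
    (deriv_le : ∀ α, deriv f α ≤ -m₁)
    (abs_iteratedDeriv_le : ∀ k : ℕ, 1 ≤ k → k ≤ 2 → ∀ α, |iteratedDeriv k f α| ≤ m₂) :
    IsStepConfiguration N L m₁ m₂ (fun j : ℤ => f (((N : ℝ) - j) / N)) := by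
  have N_pos : (0 : ℝ) < N := Nat.cast_pos.2 hN
  have f_diff : Differentiable ℝ f := hf.differentiable two_ne_zero
  have le_deriv (α : ℝ) : -m₂ ≤ deriv f α :=
    neg_le_of_abs_le (by simpa using abs_iteratedDeriv_le 1 le_rfl one_le_two α)
  have second_le (α : ℝ) : |deriv (deriv f) α| ≤ m₂ := by
    simpa [iteratedDeriv_succ] using abs_iteratedDeriv_le 2 one_le_two le_rfl α
  have node_sub (i k : ℤ) : ((N : ℝ) - (i + k : ℤ)) / N = (N - i) / N - k / N := by
    push_cast
    ring
  have node_succ_le (i : ℤ) : ((N : ℝ) - (i + 1 : ℤ)) / N ≤ (N - i) / N := by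
    gcongr
    simp
  refine ⟨hN, hm₁, fun i => ?_, fun i => ?_, fun i => ?_, fun i k => ?_⟩
  · have shift := f_add_one (((N : ℝ) - (i + N : ℤ)) / N)
    rw [node_sub, Int.cast_natCast, div_self N_pos.ne', sub_add_cancel] at shift
    rw [node_sub, Int.cast_natCast, div_self N_pos.ne', shift, sub_add_cancel]
  · have le := image_sub_le_mul_sub_of_deriv_le f_diff deriv_le (node_succ_le i)
    rw [node_sub, Int.cast_one, sub_sub_cancel] at le
    rw [node_sub, Int.cast_one]
    linear_combination le
  · have ge := mul_sub_le_image_sub_of_le_deriv f_diff le_deriv (node_succ_le i)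
    rw [node_sub, Int.cast_one, sub_sub_cancel] at ge
    rw [node_sub, Int.cast_one]
    linear_combination ge
  · have second := abs_symm_second_diff_le hf second_le (((N : ℝ) - i) / N)
      (show (0 : ℝ) ≤ k / N by positivity)
    rw [sub_eq_add_neg i]
    simpa only [node_sub, Int.cast_natCast, Int.cast_neg, neg_div, sub_neg_eq_add] using second

lemma le_exp_mul_of_hasDerivWithinAt_le {E E' : ℝ → ℝ} {a b K : ℝ}
    (hE : ∀ t ∈ Set.Icc a b, HasDerivWithinAt E (E' t) (Set.Icc a b) t)
    (hE' : ∀ t ∈ Set.Icc a b, E' t ≤ K * E t) {t : ℝ} (ht : t ∈ Set.Icc a b) :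
    E t ≤ E a * exp (K * (t - a)) := by
  rw [← gronwallBound_ε0]
  refine le_gronwallBound_of_liminf_deriv_right_le (f' := E')
    (fun s hs => (hE s hs).continuousWithinAt) (fun s hs r hr => ?_) le_rfl
    (fun s hs => by simpa using hE' s (Set.Ico_subset_Icc_self hs)) t ht
  have right_deriv : HasDerivWithinAt E (E' s) (Set.Ici s) s :=
    (hE s (Set.Ico_subset_Icc_self hs)).mono_of_mem_nhdsWithin (Icc_mem_nhdsGE_of_mem hs)
  exact right_deriv.liminf_right_slope_le hr

lemma hasDerivWithinAt_periodSeminorm_sq {N : ℕ} {z : ℝ → ℤ → ℝ} {z' : ℤ → ℝ} {s : Set ℝ} {t : ℝ}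
    (hz : ∀ i, HasDerivWithinAt (fun τ => z τ i) (z' i) s t) :
    HasDerivWithinAt (fun τ => periodSeminorm N (z τ) ^ 2)
      (2 * ∑ i ∈ Finset.Icc (1 : ℤ) N, z t i * z' i) s t := by
  simp only [periodSeminorm_sq]
  refine (HasDerivWithinAt.fun_sum fun i _ => (hz i).fun_pow 2).congr_deriv ?_
  rw [Finset.mul_sum]
  exact Finset.sum_congr rfl fun i _ => by push_cast; ring

lemma exists_periodSeminorm_solution_le {L m₁ m₂ : ℝ} (hL : 0 < L) (hm₁ : 0 < m₁) (hm₂ : 0 < m₂)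
    (T : ℝ) :
    ∃ C > 0, ∀ N (y z : ℝ → ℤ → ℝ),
      (∀ t ∈ Set.Icc 0 T, IsStepConfiguration N L m₁ m₂ (y t)) →
      (∀ t ∈ Set.Icc 0 T, Function.Periodic (z t) (N : ℤ)) →
      (∀ i, ∀ t ∈ Set.Icc 0 T,
        HasDerivWithinAt (fun s => z s i) (Zrhs N L (y t) (z t) i) (Set.Icc 0 T) t) →
      ∀ t ∈ Set.Icc 0 T, periodSeminorm N (z t) ≤ C * periodSeminorm N (z 0) := by
  obtain ⟨C, C_pos, energy_le⟩ := IsStepConfiguration.exists_sum_mul_Zrhs_le hL hm₁ hm₂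
  refine ⟨exp (C * T), exp_pos _, fun N y z hy hz hode t ht => ?_⟩
  have gronwall := le_exp_mul_of_hasDerivWithinAt_le (K := 2 * C)
    (fun s hs => hasDerivWithinAt_periodSeminorm_sq (N := N) fun i => hode i s hs)
    (fun s hs => by linarith [energy_le N _ _ (hy s hs) (hz s hs)]) ht
  refine (sq_le_sq₀ (apply_nonneg _ _) (by positivity)).1 ?_
  calc periodSeminorm N (z t) ^ 2
      ≤ periodSeminorm N (z 0) ^ 2 * exp (2 * C * (t - 0)) := gronwall
    _ ≤ periodSeminorm N (z 0) ^ 2 * exp (2 * C * T) := by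
        gcongr
        linarith [ht.2]
    _ = (exp (C * T) * periodSeminorm N (z 0)) ^ 2 := by
        rw [mul_pow, ← exp_nat_mul, mul_comm]
        push_cast
        ring_nf

lemma sqrt_sum_inv_mul_sq (N : ℕ) (f : ℤ → ℝ) :
    √(∑ i ∈ Finset.Icc (1 : ℤ) N, (N : ℝ)⁻¹ * f i ^ 2) = √(N : ℝ)⁻¹ * periodSeminorm N f := by
  rw [← Finset.mul_sum, Real.sqrt_mul (by positivity), periodSeminorm_eq_sqrt]

theorem stmt_18_general (L T m₁ m₂ : ℝ) (hL : 0 < L) (hm₁ : 0 < m₁) (hm₂ : 0 < m₂) :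
    ∃ C : ℝ, 0 < C ∧
      ∀ N : ℕ, 0 < N →
        ∀ (φ : ℝ → ℝ → ℝ) (z : ℝ → ℤ → ℝ),
          (∀ t ∈ Set.Icc (0 : ℝ) T, ContDiff ℝ 2 (fun b => φ b t)) →
          (∀ α : ℝ, ∀ t ∈ Set.Icc (0 : ℝ) T, φ (α + 1) t = φ α t - L) →
          (∀ α : ℝ, ∀ t ∈ Set.Icc (0 : ℝ) T, deriv (fun b => φ b t) α ≤ -m₁) →
          (∀ k : ℕ, 1 ≤ k → k ≤ 2 → ∀ α : ℝ, ∀ t ∈ Set.Icc (0 : ℝ) T,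
            |iteratedDeriv k (fun b => φ b t) α| ≤ m₂) →
          (∀ t ∈ Set.Icc (0 : ℝ) T, ∀ i : ℤ, z t (i + (N : ℤ)) = z t i) →
          (∀ i : ℤ, ∀ t ∈ Set.Icc (0 : ℝ) T,
            HasDerivWithinAt (fun s => z s i)
              (Zrhs N L (fun j : ℤ => φ (((N : ℝ) - (j : ℝ)) / (N : ℝ)) t) (z t) i)
              (Set.Icc 0 T) t) →
          ∀ t ∈ Set.Icc (0 : ℝ) T,
            √(∑ i ∈ Finset.Icc (1 : ℤ) (N : ℤ), (N : ℝ)⁻¹ * (z t i) ^ 2)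
              ≤ C * √(∑ i ∈ Finset.Icc (1 : ℤ) (N : ℤ), (N : ℝ)⁻¹ * (z 0 i) ^ 2) := by
  obtain ⟨C, C_pos, solution_le⟩ := exists_periodSeminorm_solution_le hL hm₁ hm₂ T
  refine ⟨C, C_pos, fun N hN φ z φ_smooth φ_add_one φ_deriv φ_bound hz hode t ht => ?_⟩
  have configuration (s : ℝ) (hs : s ∈ Set.Icc 0 T) :
      IsStepConfiguration N L m₁ m₂ (fun j : ℤ => φ (((N : ℝ) - j) / N) s) :=
    isStepConfiguration_of_profile hN hm₁ (φ_smooth s hs) (fun α => φ_add_one α s hs)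
      (fun α => φ_deriv α s hs) (fun k hk hk' α => φ_bound k hk hk' α s hs)
  rw [sqrt_sum_inv_mul_sq, sqrt_sum_inv_mul_sq, mul_left_comm]
  gcongr
  exact solution_le N _ z configuration hz hode t ht

/-- Stability of the linearized step-flow ODE system around the exact step
locations `y_i(t) = φ((N−i)/N, t)` of a profile `φ` with `φ(α+1) = φ(α) − L`,
`φ_α ≤ −m₁ < 0`, `|∂_α^k φ| ≤ m₂` (`1 ≤ k ≤ 6`): every `N`-periodic `C¹` solution `z` of the
linearized system satisfies `‖z(t)‖ ≤ C‖z(0)‖` in the scaled norm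
`‖z‖ = (Σ_{i=1}^N a z_i²)^{1/2}`, with `C = C(m₁,m₂,L,T)` independent of `N`. -/
theorem stmt_18 (L T m₁ m₂ : ℝ) (hL : 0 < L) (hT : 0 < T) (hm₁ : 0 < m₁) (hm₂ : 0 < m₂) :
    ∃ C : ℝ, 0 < C ∧
      ∀ N : ℕ, 2 ≤ N →
        ∀ (φ : ℝ → ℝ → ℝ) (z : ℝ → ℤ → ℝ),
          (∀ α : ℝ, ContinuousOn (fun t => φ α t) (Set.Icc 0 T)) →
          (∀ t ∈ Set.Icc (0:ℝ) T, ContDiff ℝ 6 (fun b => φ b t)) →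
          (∀ α : ℝ, ∀ t ∈ Set.Icc (0:ℝ) T, φ (α + 1) t = φ α t - L) →
          (∀ α : ℝ, ∀ t ∈ Set.Icc (0:ℝ) T, deriv (fun b => φ b t) α ≤ -m₁) →
          (∀ k : ℕ, 1 ≤ k → k ≤ 6 → ∀ α : ℝ, ∀ t ∈ Set.Icc (0:ℝ) T,
            |iteratedDeriv k (fun b => φ b t) α| ≤ m₂) →
          (∀ t ∈ Set.Icc (0:ℝ) T, ∀ i : ℤ, z t (i + (N:ℤ)) = z t i) →
          (∀ i : ℤ, ∀ t ∈ Set.Icc (0:ℝ) T,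
            HasDerivWithinAt (fun s => z s i)
              (Zrhs N L (fun j : ℤ => φ (((N:ℝ) - (j:ℝ)) / (N:ℝ)) t) (z t) i)
              (Set.Icc 0 T) t) →
          ∀ t ∈ Set.Icc (0:ℝ) T,
            Real.sqrt (∑ i ∈ Finset.Icc (1:ℤ) (N:ℤ), (N:ℝ)⁻¹ * (z t i) ^ 2)
              ≤ C * Real.sqrt (∑ i ∈ Finset.Icc (1:ℤ) (N:ℤ), (N:ℝ)⁻¹ * (z 0 i) ^ 2) := by
  obtain ⟨C, C_pos, bound⟩ := stmt_18_general L T m₁ m₂ hL hm₁ hm₂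
  exact ⟨C, C_pos, fun N hN φ z _ φ_smooth φ_add_one φ_deriv φ_bound hz hode =>
    bound N (by omega) φ z (fun t ht => (φ_smooth t ht).of_le (by norm_num)) φ_add_one φ_deriv
      (fun k hk hk' => φ_bound k hk (by omega)) hz hode⟩
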